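/- For every ε > 0 there exist δ > 0 and N₀ such that the following holds for every N ≥ N₀. Let K be a properly edge-colored complete graph on N vertices in which every color appears on at least (1−δ)·N/2 and at most (1+δ)·N/2 edges. Let R be a random subset of the set of colors, obtained by including each color independently with probability 1/2. Then with probability at least 1−ε there is a collection 𝒞 of at most N·log₂ log₂ N / (log₂ N)² available cliques such that R is exactly the union over A ∈ 𝒞 of the color sets C(A), where an available clique is either a single edge whose color lies in R, or a set A of vertices all of whose internal edges have pairwise distinct colors all lying in R, and C(A) denotes the set of colors appearing on the edges inside A. -/

import Mathlib

/-- The set of colors appearing on edges inside a set `A` of vertices,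
for an edge-coloring `g`. -/
def cliqueColors {N : ℕ} {C : Type} (g : Fin N → Fin N → C)
    (A : Finset (Fin N)) : Set C :=
  {c | ∃ x ∈ A, ∃ y ∈ A, x ≠ y ∧ g x y = c}

section aux1
open Finset

lemma aux_card_superset {C : Type} [Fintype C] [DecidableEq C] (S : Finset C) :
    (((univ : Finset (Finset C)).filter (fun R => S ⊆ R)).card : ℝ)
      = 2 ^ (Fintype.card C) / 2 ^ S.card := by
  have h : (univ : Finset (Finset C)).filter (fun R => S ⊆ R) = Finset.Icc S univ := by
    ext R; simp
  rw [h, Finset.card_Icc_finset (subset_univ _), Finset.card_univ]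
  push_cast
  rw [eq_div_iff (by positivity), ← pow_add, Nat.sub_add_cancel (card_le_univ S)]

lemma aux_second_moment {C ι : Type} [Fintype C] [DecidableEq C] (T : Finset ι)
    (S : ι → Finset C) (s : ℕ) (hs : ∀ b ∈ T, (S b).card = s) (ρ : ℝ)
    (h : ∀ b ∈ T, ∑ b' ∈ T, (2 : ℝ) ^ (S b ∩ S b').card ≤ (1 + ρ) * T.card) :
    ∑ R : Finset C, (((T.filter (fun b => S b ⊆ R)).card : ℝ) - T.card / 2 ^ s) ^ 2
      ≤ 2 ^ (Fintype.card C) * (ρ * ((T.card : ℝ) / 2 ^ s) ^ 2) := by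
  set n := Fintype.card C
  have hX : ∀ R : Finset C, ((T.filter (fun b => S b ⊆ R)).card : ℝ)
      = ∑ b ∈ T, if S b ⊆ R then (1 : ℝ) else 0 := by
    intro R; rw [Finset.card_filter]; push_cast; rfl
  have h1 : ∑ R : Finset C, ((T.filter (fun b => S b ⊆ R)).card : ℝ)
      = T.card * (2 ^ n / 2 ^ s) := by
    simp_rw [hX]
    rw [Finset.sum_comm]
    rw [Finset.sum_congr rfl (g := fun _ => (2 : ℝ) ^ n / 2 ^ s)]
    · simp
    · intro b hb
      rw [← hs b hb, ← aux_card_superset, Finset.card_filter]; push_cast; rfl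
  have h2 : ∑ R : Finset C, ((T.filter (fun b => S b ⊆ R)).card : ℝ) ^ 2
      ≤ 2 ^ n * ((1 + ρ) * ((T.card : ℝ) / 2 ^ s) ^ 2) := by
    have : ∀ R : Finset C, ((T.filter (fun b => S b ⊆ R)).card : ℝ) ^ 2
        = ∑ b ∈ T, ∑ b' ∈ T, if S b ∪ S b' ⊆ R then (1 : ℝ) else 0 := by
      intro R
      rw [hX, sq, Finset.sum_mul_sum]
      refine sum_congr rfl fun b _ => sum_congr rfl fun b' _ => ?_
      simp only [union_subset_iff]
      split_ifs <;> simp_all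
    simp_rw [this]
    rw [Finset.sum_comm]
    have h3 : ∀ b ∈ T, ∑ R : Finset C, ∑ b' ∈ T, (if S b ∪ S b' ⊆ R then (1 : ℝ) else 0)
        ≤ 2 ^ n / (2 ^ s * 2 ^ s) * ((1 + ρ) * T.card) := by
      intro b hb
      rw [Finset.sum_comm]
      calc _ = ∑ b' ∈ T, 2 ^ n / (2 ^ s * 2 ^ s) * (2 : ℝ) ^ (S b ∩ S b').card := by
            refine sum_congr rfl fun b' hb' => ?_
            have := aux_card_superset (S b ∪ S b')
            rw [Finset.card_filter] at this
            push_cast at this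
            rw [this]
            have h4 := Finset.card_union_add_card_inter (S b) (S b')
            rw [hs b hb, hs b' hb'] at h4
            have h5 : (2 : ℝ) ^ (S b ∪ S b').card * 2 ^ (S b ∩ S b').card = 2 ^ s * 2 ^ s := by
              rw [← pow_add, ← pow_add, h4]
            rw [← h5]
            field_simp
            rfl
        _ = 2 ^ n / (2 ^ s * 2 ^ s) * ∑ b' ∈ T, (2 : ℝ) ^ (S b ∩ S b').card := by
            rw [Finset.mul_sum]
        _ ≤ _ := by gcongr; exact h b hb
    calc _ ≤ ∑ b ∈ T, 2 ^ n / (2 ^ s * 2 ^ s) * ((1 + ρ) * (T.card : ℝ)) := sum_le_sum h3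
      _ = _ := by rw [sum_const, nsmul_eq_mul]; field_simp
  have : ∀ R : Finset C, (((T.filter (fun b => S b ⊆ R)).card : ℝ) - T.card / 2 ^ s) ^ 2
      = ((T.filter (fun b => S b ⊆ R)).card : ℝ) ^ 2
        - 2 * (T.card / 2 ^ s) * ((T.filter (fun b => S b ⊆ R)).card : ℝ)
        + (T.card / 2 ^ s) ^ 2 := by intro R; ring
  simp_rw [this]
  rw [sum_add_distrib, sum_sub_distrib, ← mul_sum, h1]
  simp only [sum_const, card_univ, Fintype.card_finset, nsmul_eq_mul]
  push_cast
  have : 2 * ((T.card : ℝ) / 2 ^ s) * (T.card * (2 ^ n / 2 ^ s))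
    = 2 * (2 ^ n * (T.card / 2 ^ s) ^ 2) := by ring
  rw [this]
  nlinarith [h2]

end aux1
section aux2
open Finset

open Classical in
lemma aux_graph (m : ℕ) (H : SimpleGraph (Fin (m + 2))) (h01 : H.Adj 0 1) :
    ∃ (f : Fin (m + 2) → Option (Fin (m + 2))) (rk : Fin (m + 2) → ℕ),
      f 0 = none ∧ (∀ i j, f j = some i → H.Adj i j ∧ rk i < rk j) ∧
      2 * (((univ : Finset (Fin (m + 2) × Fin (m + 2))).filter
          (fun p => p.1 < p.2 ∧ H.Adj p.1 p.2)).card - 1)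
        ≤ ((univ : Finset (Fin m)).filter (fun j => f j.succ.succ ≠ none)).card * (m + 3) := by
  -- roots
  let r : Fin (m + 2) → Fin (m + 2) := fun j =>
    if H.Reachable 0 j then 0 else (H.connectedComponentMk j).out
  have hr : ∀ j, H.Reachable (r j) j := by
    intro j
    by_cases h : H.Reachable 0 j
    · simp only [r, h, if_true]
    · simp only [r, h, if_false]
      exact SimpleGraph.ConnectedComponent.exact (Quot.out_eq (H.connectedComponentMk j))
  have hrr : ∀ i j, H.Adj i j → r i = r j := by
    intro i j hij
    have h1 : H.Reachable 0 i ↔ H.Reachable 0 j :=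
      ⟨fun h => h.trans hij.reachable, fun h => h.trans hij.symm.reachable⟩
    have h2 : H.connectedComponentMk i = H.connectedComponentMk j :=
      SimpleGraph.ConnectedComponent.sound hij.reachable
    simp only [r, h1, h2]
  have hr0 : r 0 = 0 := by simp [r]
  have hex : ∀ j, r j ≠ j → ∃ i, H.Adj i j ∧ H.dist i (r i) < H.dist j (r j) := by
    intro j hj
    obtain ⟨w, hw⟩ := (hr j).symm.exists_walk_length_eq_dist
    have hw2 : ∀ u, ∀ w : H.Walk j u, u ≠ j →
        ∃ v, H.Adj j v ∧ ∃ p : H.Walk v u, p.length < w.length := by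
      intro u w hu
      cases w with
      | nil => exact absurd rfl hu
      | cons h p => exact ⟨_, h, p, by simp⟩
    obtain ⟨v, hv, p, hp⟩ := hw2 _ w hj
    refine ⟨v, hv.symm, ?_⟩
    rw [← hw, ← hrr j v hv]
    exact lt_of_le_of_lt (SimpleGraph.dist_le p) hp
  choose! pa hpa using hex
  have hroot : ∀ i j, H.Adj i j → r i = i → r j ≠ j := by
    intro i j hij hi hj
    have := hrr i j hij
    rw [hi, hj] at this
    exact hij.ne this
  refine ⟨fun j => if r j = j then none else some (pa j), fun j => H.dist j (r j), by simp [hr0],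
    ?_, ?_⟩
  · intro i j h
    by_cases hj : r j = j
    · simp [hj] at h
    · simp only [hj, if_false, Option.some.injEq] at h
      subst h
      exact hpa j hj
  · set Q := (univ : Finset (Fin (m + 2))).filter (fun j => r j ≠ j) with hQ
    set Q' := (univ : Finset (Fin m)).filter (fun j => r j.succ.succ ≠ j.succ.succ) with hQ'
    have hQc : Q.card = Q'.card + 1 := by
      rw [hQ, hQ', Finset.card_filter, Finset.card_filter, Fin.sum_univ_succ, Fin.sum_univ_succ]
      have : r 1 ≠ 1 := hroot 0 1 h01 hr0
      simp [hr0, this, add_comm]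
    have hgoal : (univ : Finset (Fin m)).filter (fun j => (fun j => if r j = j then none else some (pa j)) j.succ.succ ≠ none) = Q' := by
      ext j; simp [hQ']
    rw [hgoal]
    set E := (univ : Finset (Fin (m + 2) × Fin (m + 2))).filter
          (fun p => p.1 < p.2 ∧ H.Adj p.1 p.2)
    have hE : E ∪ E.image Prod.swap ⊆ Q.offDiag ∪ (Q.image (fun j => (r j, j)) ∪
        Q.image (fun j => (j, r j))) := by
      have key : ∀ a b, H.Adj a b → (a, b) ∈ Q.offDiag ∪ (Q.image (fun j => (r j, j)) ∪
        Q.image (fun j => (j, r j))) := by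
        intro a b hab
        have h1 := hrr a b hab
        by_cases ha : r a = a
        · have hb := hroot a b hab ha
          simp only [mem_union, mem_image]
          right; left; exact ⟨b, by simp [hQ, hb], by rw [← h1, ha]⟩
        · by_cases hb : r b = b
          · simp only [mem_union, mem_image]
            right; right; exact ⟨a, by simp [hQ, ha], by rw [h1, hb]⟩
          · simp only [mem_union, mem_offDiag]
            left; simp [hQ, ha, hb, hab.ne]
      intro ⟨a, b⟩ hp
      simp only [mem_union, mem_image, E, mem_filter, mem_univ, true_and, Prod.exists,
        Prod.swap_prod_mk, Prod.mk.injEq] at hp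
      apply key
      rcases hp with hp | ⟨x, y, hxy, rfl, rfl⟩
      · exact hp.2
      · exact hxy.2.symm
    have hE2 : (E ∪ E.image Prod.swap).card = 2 * E.card := by
      rw [card_union_of_disjoint, card_image_of_injective _ Prod.swap_injective]
      · ring
      · rw [Finset.disjoint_left]
        rintro ⟨a, b⟩ h1 h2
        simp only [mem_image, E, mem_filter, mem_univ, true_and, Prod.exists,
          Prod.swap_prod_mk, Prod.mk.injEq] at h1 h2
        obtain ⟨x, y, hxy, rfl, rfl⟩ := h2
        exact absurd h1.1 (not_lt.mpr hxy.1.le)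
    have h3 := (card_le_card hE).trans ((card_union_le _ _).trans
      (Nat.add_le_add_left ((card_union_le _ _).trans (Nat.add_le_add card_image_le card_image_le)) _))
    rw [hE2, Finset.offDiag_card, hQc] at h3
    have h4 : Q'.card ≤ m := by simpa using card_le_univ Q'
    have h5 : (Q'.card + 1) * (Q'.card + 1) - (Q'.card + 1) = Q'.card * Q'.card + Q'.card := by
      rw [Nat.sub_eq_iff_eq_add (by nlinarith)]; ring
    rw [h5] at h3
    have h6 : Q'.card * Q'.card ≤ Q'.card * m := Nat.mul_le_mul_left _ h4
    have h7 : Q'.card * (m + 3) = Q'.card * m + 3 * Q'.card := by ring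
    rw [h7]
    omega

end aux2
section aux3
open Finset

def auxRB {V C : Type} (g : V → V → C) {k : ℕ} (b : Fin k → V) : Prop :=
  Function.Injective b ∧ ∀ i j i' j', i ≠ j → i' ≠ j' → g (b i) (b j) = g (b i') (b j') →
    (i = i' ∧ j = j') ∨ (i = j' ∧ j = i')

def auxPP (k : ℕ) : Finset (Fin k × Fin k) := univ.filter (fun p => p.1 < p.2)

def auxcols {V C : Type} [DecidableEq C] (g : V → V → C) {k : ℕ} (b : Fin k → V) : Finset C :=
  (auxPP k).image (fun p => g (b p.1) (b p.2))

open Classical in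
noncomputable def auxT {V C : Type} [Fintype V] (g : V → V → C) (m : ℕ) (c : C) :
    Finset (Fin (m + 2) → V) :=
  univ.filter (fun b => auxRB g b ∧ g (b 0) (b 1) = c)

open Classical in
noncomputable def auxn {V C : Type} [Fintype V] (g : V → V → C) (c : C) : Finset (V × V) :=
  univ.filter (fun p => p.1 ≠ p.2 ∧ g p.1 p.2 = c)

lemma aux_encode {V C : Type} [Fintype V] [DecidableEq C] (g : V → V → C)
    (hsymm : ∀ x y, g x y = g y x)
    (m h : ℕ) (hm : m + 3 = 2 * h) (c : C) (S : Finset C) (hc : c ∈ S)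
    (b : Fin (m + 2) → V) (hb : b ∈ auxT g m c) :
    ∃ (φ : Fin m → V ⊕ (Fin (m + 2) × S)) (rk : Fin (m + 2) → ℕ),
      (∀ j v, φ j = Sum.inl v → b j.succ.succ = v) ∧
      (∀ j i s, φ j = Sum.inr (i, s) →
        i ≠ j.succ.succ ∧ rk i < rk j.succ.succ ∧ g (b i) (b j.succ.succ) = s) ∧
      (2 : ℝ) ^ (S.erase c ∩ (auxcols g b).erase c).card ≤
        ∏ j, Sum.elim (fun _ => (1 : ℝ)) (fun _ => 2 ^ h) (φ j) := by
  classical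
  simp only [auxT, mem_filter, mem_univ, true_and] at hb
  obtain ⟨⟨hinj, hrb⟩, h01⟩ := hb
  let H : SimpleGraph (Fin (m + 2)) :=
    { Adj := fun i j => i ≠ j ∧ g (b i) (b j) ∈ S
      symm := ⟨fun i j hij => ⟨hij.1.symm, by rw [hsymm]; exact hij.2⟩⟩
      loopless := ⟨fun i hi => hi.1 rfl⟩ }
  have hA : H.Adj 0 1 := ⟨by simp, by rw [h01]; exact hc⟩
  obtain ⟨f, rk, hf0, hf, hcard⟩ := aux_graph m H hA
  have hfS : ∀ i j, f j = some i → g (b i) (b j) ∈ S := fun i j hij => (hf i j hij).1.2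
  let φ : Fin m → V ⊕ (Fin (m + 2) × S) := fun j =>
    match hj : f j.succ.succ with
    | none => Sum.inl (b j.succ.succ)
    | some i => Sum.inr (i, ⟨g (b i) (b j.succ.succ), hfS _ _ hj⟩)
  have hφ1 : ∀ j, f j.succ.succ = none → φ j = Sum.inl (b j.succ.succ) := by
    intro j hj
    simp only [φ]
    split
    · rfl
    · simp_all
  have hφ2 : ∀ j i (hj : f j.succ.succ = some i),
      φ j = Sum.inr (i, ⟨g (b i) (b j.succ.succ), hfS _ _ hj⟩) := by
    intro j i hj
    simp only [φ]
    split
    · simp_all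
    · rename_i i' h'
      have : i' = i := by rw [hj] at h'; simpa using h'.symm
      subst this; rfl
  refine ⟨φ, rk, ?_, ?_, ?_⟩
  · intro j v hj
    rcases hfj : f j.succ.succ with _ | i
    · rw [hφ1 j hfj] at hj; simpa using hj
    · rw [hφ2 j i hfj] at hj; simp at hj
  · intro j i s hj
    rcases hfj : f j.succ.succ with _ | i'
    · rw [hφ1 j hfj] at hj; simp at hj
    · rw [hφ2 j i' hfj] at hj
      simp only [Sum.inr.injEq, Prod.mk.injEq] at hj
      obtain ⟨rfl, rfl⟩ := hj
      exact ⟨(hf _ _ hfj).1.1, (hf _ _ hfj).2, rfl⟩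
  · set E := (univ : Finset (Fin (m + 2) × Fin (m + 2))).filter
          (fun p => p.1 < p.2 ∧ H.Adj p.1 p.2) with hE
    set t := ((univ : Finset (Fin m)).filter (fun j => f j.succ.succ ≠ none)).card with ht
    have h1 : (S.erase c ∩ (auxcols g b).erase c).card ≤ E.card - 1 := by
      have hsub : S.erase c ∩ (auxcols g b).erase c ⊆
          (E.image (fun p => g (b p.1) (b p.2))).erase c := by
        intro x hx
        simp only [mem_inter, mem_erase, auxcols, mem_image, auxPP, mem_filter, mem_univ,
          true_and] at hx
        obtain ⟨⟨hxc, hxS⟩, _, ⟨p, hp, rfl⟩⟩ := hx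
        rw [mem_erase]
        refine ⟨hxc, mem_image.2 ⟨p, ?_, rfl⟩⟩
        simp only [hE, mem_filter, mem_univ, true_and]
        exact ⟨hp, hp.ne, hxS⟩
      refine (card_le_card hsub).trans ?_
      rw [card_erase_of_mem]
      · exact Nat.sub_le_sub_right card_image_le 1
      · refine mem_image.2 ⟨(0, 1), ?_, h01⟩
        simp only [hE, mem_filter, mem_univ, true_and]
        exact ⟨by simp, hA⟩
    have h2 : (S.erase c ∩ (auxcols g b).erase c).card ≤ h * t := by
      have : t * (m + 3) = 2 * (h * t) := by rw [hm]; ring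
      have hcard' : 2 * (E.card - 1) ≤ t * (m + 3) := by convert hcard
      omega
    have h3 : ∀ j, Sum.elim (fun _ => (1 : ℝ)) (fun _ => 2 ^ h) (φ j)
        = if f j.succ.succ ≠ none then (2 : ℝ) ^ h else 1 := by
      intro j
      rcases hfj : f j.succ.succ with _ | i
      · rw [hφ1 j hfj]; simp
      · rw [hφ2 j i hfj]; simp
    simp_rw [h3]
    rw [Finset.prod_ite, prod_const, prod_const, one_pow, mul_one, ← ht, ← pow_mul]
    exact pow_le_pow_right₀ (by norm_num) h2

lemma aux_overlap {V C : Type} [Fintype V] [DecidableEq C] (g : V → V → C)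
    (hsymm : ∀ x y, g x y = g y x)
    (hprop : ∀ x y z, x ≠ y → x ≠ z → y ≠ z → g x y ≠ g x z)
    (m h : ℕ) (hm : m + 3 = 2 * h) (c : C) (S : Finset C) (hc : c ∈ S) :
    ∑ b ∈ auxT g m c, (2 : ℝ) ^ (S.erase c ∩ (auxcols g b).erase c).card ≤
      (auxn g c).card * ((Fintype.card V : ℝ) + (m + 2) * S.card * 2 ^ h) ^ m := by
  classical
  have : Nonempty S := ⟨⟨c, hc⟩⟩
  have hen := aux_encode g hsymm m h hm c S hc
  choose! φ rk h1 h2 h3 using hen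
  let Φ : (Fin (m + 2) → V) → (V × V) × (Fin m → V ⊕ (Fin (m + 2) × S)) :=
    fun b => ((b 0, b 1), φ b)
  let w : (V × V) × (Fin m → V ⊕ (Fin (m + 2) × S)) → ℝ := fun q =>
    ∏ j, Sum.elim (fun _ => (1 : ℝ)) (fun _ => 2 ^ h) (q.2 j)
  have hw : ∀ q, 0 ≤ w q := by
    intro q
    refine prod_nonneg fun j _ => ?_
    rcases q.2 j with x | x <;> simp
  have hinj : Set.InjOn Φ (auxT g m c) := by
    intro b hb b' hb' hbb
    simp only [Φ, Prod.mk.injEq] at hbb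
    obtain ⟨⟨e0, e1⟩, e2⟩ := hbb
    have key : ∀ n, ∀ i, rk b i = n → b i = b' i := by
      intro n
      induction n using Nat.strong_induction_on with
      | _ n ih =>
        intro i hi
        refine Fin.cases (motive := fun i => rk b i = n → b i = b' i) (fun _ => e0) ?_ i hi
        intro i
        refine Fin.cases (motive := fun i : Fin (m + 1) => rk b i.succ = n → b i.succ = b' i.succ)
          (fun _ => e1) ?_ i
        intro j hj
        rcases hφ : φ b j with v | ⟨a, s⟩
        · rw [h1 b hb j v hφ, h1 b' hb' j v (by rw [← e2, hφ])]
        · obtain ⟨q1, q2, q3⟩ := h2 b hb j a s hφ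
          obtain ⟨r1, r2, r3⟩ := h2 b' hb' j a s (by rw [← e2, hφ])
          have hab : b a = b' a := ih (rk b a) (by omega) a rfl
          by_contra hne
          have i1 : Function.Injective b := by
            simp only [auxT, mem_coe, mem_filter] at hb; exact hb.2.1.1
          have i2 : Function.Injective b' := by
            simp only [auxT, mem_coe, mem_filter] at hb'; exact hb'.2.1.1
          refine hprop (b a) (b j.succ.succ) (b' j.succ.succ) (i1.ne q1) ?_ hne ?_
          · rw [hab]; exact i2.ne q1
          · rw [q3, hab, r3]
    funext i
    exact key _ i rfl
  calc ∑ b ∈ auxT g m c, (2 : ℝ) ^ (S.erase c ∩ (auxcols g b).erase c).card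
      ≤ ∑ b ∈ auxT g m c, w (Φ b) := sum_le_sum fun b hb => h3 b hb
    _ = ∑ q ∈ (auxT g m c).image Φ, w q := by rw [sum_image hinj]
    _ ≤ ∑ q ∈ (auxn g c) ×ˢ (univ : Finset (Fin m → V ⊕ (Fin (m + 2) × S))), w q := by
        refine sum_le_sum_of_subset_of_nonneg ?_ fun q _ _ => hw q
        intro q hq
        obtain ⟨b, hb, rfl⟩ := mem_image.1 hq
        simp only [auxT, mem_filter, mem_univ, true_and] at hb
        simp only [Φ, mem_product, mem_univ, and_true, auxn, mem_filter, true_and]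
        exact ⟨hb.1.1.ne (by simp), hb.2⟩
    _ = _ := by
        rw [sum_product]
        simp only [w, sum_const, nsmul_eq_mul]
        congr 1
        rw [← Fintype.prod_sum (fun (_ : Fin m) (x : V ⊕ (Fin (m + 2) × S)) =>
          Sum.elim (fun _ => (1 : ℝ)) (fun _ => 2 ^ h) x)]
        rw [prod_const, card_univ, Fintype.card_fin]
        congr 1
        rw [Fintype.sum_sum_type]
        simp

end aux3
section aux4
open Finset

lemma aux_mem_cols {V C : Type} [DecidableEq C] (g : V → V → C)
    (hsymm : ∀ x y, g x y = g y x) {k : ℕ} (b : Fin k → V) (c : C) :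
    c ∈ auxcols g b ↔ ∃ i j, i ≠ j ∧ g (b i) (b j) = c := by
  simp only [auxcols, auxPP, mem_image, mem_filter, mem_univ, true_and, Prod.exists]
  constructor
  · rintro ⟨i, j, hij, h⟩
    exact ⟨i, j, hij.ne, h⟩
  · rintro ⟨i, j, hij, h⟩
    rcases lt_or_gt_of_ne hij with h1 | h1
    · exact ⟨i, j, h1, h⟩
    · exact ⟨j, i, h1, by rw [hsymm]; exact h⟩

lemma aux_injOn {V C : Type} (g : V → V → C) {k : ℕ} (b : Fin k → V) (hb : auxRB g b) :
    Set.InjOn (fun p : Fin k × Fin k => g (b p.1) (b p.2)) (auxPP k) := by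
  rintro ⟨i, j⟩ h1 ⟨i', j'⟩ h2 h
  simp only [auxPP, coe_filter, mem_univ, true_and, Set.mem_ofPred_eq] at h1 h2 h
  rcases hb.2 i j i' j' h1.ne h2.ne h with ⟨rfl, rfl⟩ | ⟨rfl, rfl⟩
  · rfl
  · exact absurd h1 (not_lt.2 h2.le)

lemma aux_card_PP (k : ℕ) : 2 * (auxPP k).card = k * k - k := by
  have h : (auxPP k) ∪ (auxPP k).image Prod.swap = (univ : Finset (Fin k)).offDiag := by
    ext ⟨a, b⟩
    simp only [auxPP, mem_union, mem_filter, mem_univ, true_and, mem_image, Prod.exists,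
      Prod.swap_prod_mk, Prod.mk.injEq, mem_offDiag]
    constructor
    · rintro (h | ⟨x, y, h, rfl, rfl⟩)
      · exact h.ne
      · exact h.ne'
    · intro h
      rcases lt_or_gt_of_ne h with h1 | h1
      · exact Or.inl h1
      · exact Or.inr ⟨b, a, h1, rfl, rfl⟩
  have h2 := congrArg Finset.card h
  rw [card_union_of_disjoint, card_image_of_injective _ Prod.swap_injective, offDiag_card] at h2
  · simp at h2; omega
  · rw [Finset.disjoint_left]
    rintro ⟨a, b⟩ h1 h2
    simp only [auxPP, mem_image, mem_filter, mem_univ, true_and, Prod.exists,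
      Prod.swap_prod_mk, Prod.mk.injEq] at h1 h2
    obtain ⟨x, y, hxy, rfl, rfl⟩ := h2
    exact absurd h1 (not_lt.mpr hxy.le)

lemma aux_snoc {V C : Type} (g : V → V → C)
    (hsymm : ∀ x y, g x y = g y x)
    (hprop : ∀ x y z, x ≠ y → x ≠ z → y ≠ z → g x y ≠ g x z)
    {k : ℕ} (b : Fin k → V) (hb : auxRB g b) (v : V) (hv : ∀ i, b i ≠ v)
    (hv2 : ∀ i i' j', i' ≠ j' → g (b i) v ≠ g (b i') (b j')) :
    auxRB g (Fin.snoc b v : Fin (k + 1) → V) := by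
  have hp : ∀ i i', g (b i) v = g (b i') v → i = i' := by
    intro i i' h
    by_contra hne
    rw [hsymm _ v, hsymm _ v] at h
    exact hprop v (b i) (b i') (hv i).symm (hv i').symm (hb.1.ne hne) h
  have hv3 : ∀ i i' j', i' ≠ j' → g v (b i) ≠ g (b i') (b j') := by
    intro i i' j' h; rw [hsymm]; exact hv2 i i' j' h
  constructor
  · intro i j
    induction i using Fin.lastCases with
    | last =>
      induction j using Fin.lastCases with
      | last => simp
      | cast j => simp only [Fin.snoc_last, Fin.snoc_castSucc]; intro h; exact absurd h.symm (hv j)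
    | cast i =>
      induction j using Fin.lastCases with
      | last => simp only [Fin.snoc_last, Fin.snoc_castSucc]; intro h; exact absurd h (hv i)
      | cast j => simp only [Fin.snoc_castSucc]; intro h; rw [hb.1 h]
  · intro i j i' j'
    induction i using Fin.lastCases with
    | last =>
      induction j using Fin.lastCases with
      | last => simp
      | cast j =>
        induction i' using Fin.lastCases with
        | last =>
          induction j' using Fin.lastCases with
          | last => simp
          | cast j' =>
            simp only [Fin.snoc_last, Fin.snoc_castSucc]
            intro _ _ h
            rw [hsymm v, hsymm v] at h
            left; exact ⟨trivial, by rw [hp _ _ h]⟩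
        | cast i' =>
          induction j' using Fin.lastCases with
          | last =>
            simp only [Fin.snoc_last, Fin.snoc_castSucc]
            intro _ _ h
            rw [hsymm v] at h
            right; exact ⟨trivial, by rw [hp _ _ h]⟩
          | cast j' =>
            simp only [Fin.snoc_last, Fin.snoc_castSucc]
            intro _ h1 h
            exact absurd h (hv3 _ _ _ (fun e => h1 (by rw [e])))
    | cast i =>
      induction j using Fin.lastCases with
      | last =>
        induction i' using Fin.lastCases with
        | last =>
          induction j' using Fin.lastCases with
          | last => simp
          | cast j' =>
            simp only [Fin.snoc_last, Fin.snoc_castSucc]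
            intro _ _ h
            rw [hsymm v] at h
            right; exact ⟨by rw [hp _ _ h], trivial⟩
        | cast i' =>
          induction j' using Fin.lastCases with
          | last =>
            simp only [Fin.snoc_last, Fin.snoc_castSucc]
            intro _ _ h
            left; exact ⟨by rw [hp _ _ h], trivial⟩
          | cast j' =>
            simp only [Fin.snoc_last, Fin.snoc_castSucc]
            intro _ h1 h
            exact absurd h (hv2 _ _ _ (fun e => h1 (by rw [e])))
      | cast j =>
        induction i' using Fin.lastCases with
        | last =>
          induction j' using Fin.lastCases with
          | last => simp
          | cast j' =>
            simp only [Fin.snoc_last, Fin.snoc_castSucc]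
            intro h1 _ h
            exact absurd h.symm (hv3 _ _ _ (fun e => h1 (by rw [e])))
        | cast i' =>
          induction j' using Fin.lastCases with
          | last =>
            simp only [Fin.snoc_last, Fin.snoc_castSucc]
            intro h1 _ h
            exact absurd h.symm (hv2 _ _ _ (fun e => h1 (by rw [e])))
          | cast j' =>
            simp only [Fin.snoc_castSucc]
            intro h1 h2 h
            rcases hb.2 i j i' j' (fun e => h1 (by rw [e])) (fun e => h2 (by rw [e])) h with h | h
            · left; rw [h.1, h.2]; exact ⟨rfl, rfl⟩
            · right; rw [h.1, h.2]; exact ⟨rfl, rfl⟩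

lemma aux_lower {V C : Type} [Fintype V] (g : V → V → C)
    (hsymm : ∀ x y, g x y = g y x)
    (hprop : ∀ x y z, x ≠ y → x ≠ z → y ≠ z → g x y ≠ g x z)
    (c : C) (D : ℕ) (m : ℕ) (hD : (m + 2) + (m + 2) ^ 3 ≤ D) :
    (auxn g c).card * (Fintype.card V - D) ^ m ≤ (auxT g m c).card := by
  classical
  induction m with
  | zero =>
    simp only [pow_zero, mul_one]
    refine card_le_card_of_injOn (fun p => (![p.1, p.2] : Fin (0 + 2) → V)) ?_ ?_
    · rintro ⟨x, y⟩ hp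
      simp only [auxn, coe_filter, mem_univ, true_and, Set.mem_ofPred_eq] at hp
      refine mem_filter.2 ⟨mem_univ _, ⟨?_, ?_⟩, ?_⟩
      · intro i j
        fin_cases i <;> fin_cases j <;> simp [hp.1, Ne.symm hp.1]
      · intro i j i' j'
        fin_cases i <;> fin_cases j <;> fin_cases i' <;> fin_cases j' <;> simp
      · simpa using hp.2
    · rintro ⟨x, y⟩ _ ⟨x', y'⟩ _ h
      have h0 := congrFun h 0
      have h1 := congrFun h 1
      simp at h0 h1
      rw [h0, h1]
  | succ m ih =>
    have ih := ih (le_trans (by gcongr <;> omega) hD)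
    have hgood : ∀ b ∈ auxT g m c, Fintype.card V - D ≤
        ((univ : Finset V).filter
          (fun v => (Fin.snoc b v : Fin (m + 1 + 2) → V) ∈ auxT g (m + 1) c)).card := by
      intro b hb
      simp only [auxT, mem_filter, mem_univ, true_and] at hb
      set G := ((univ : Finset V).filter
          (fun v => (Fin.snoc b v : Fin (m + 1 + 2) → V) ∈ auxT g (m + 1) c)) with hG
      let B1 : Finset V := univ.image b
      let B2 : Finset V := (univ : Finset (Fin (m + 2) × Fin (m + 2) × Fin (m + 2))).biUnion
        (fun q => univ.filter (fun v => b q.1 ≠ v ∧ g (b q.1) v = g (b q.2.1) (b q.2.2)))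
      have hsub : (univ : Finset V) ⊆ G ∪ (B1 ∪ B2) := by
        intro v _
        by_cases h1 : v ∈ B1
        · simp [h1]
        by_cases h2 : v ∈ B2
        · simp [h2]
        rw [mem_union]; left
        have h1' : ∀ i, b i ≠ v := by simpa [B1] using h1
        have h2' : ∀ i i' j', g (b i) v ≠ g (b i') (b j') := by
          intro i i' j' he
          apply h2
          simp only [B2, mem_biUnion, mem_univ, true_and, mem_filter, Prod.exists]
          exact ⟨i, i', j', h1' i, he⟩
        simp only [hG, mem_filter, mem_univ, true_and, auxT]
        refine ⟨aux_snoc g hsymm hprop b hb.1 v h1' (fun i i' j' _ => h2' i i' j'), ?_⟩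
        have e0 : (Fin.snoc b v : Fin (m + 1 + 2) → V) 0 = b 0 := Fin.snoc_castSucc (α := fun _ => V) v b 0
        have e1 : (Fin.snoc b v : Fin (m + 1 + 2) → V) 1 = b 1 := Fin.snoc_castSucc (α := fun _ => V) v b 1
        rw [e0, e1]; exact hb.2
      have hB1 : B1.card ≤ m + 2 := card_image_le.trans (by simp)
      have hB2 : B2.card ≤ (m + 2) ^ 3 := by
        refine (card_biUnion_le_card_mul _ _ 1 ?_).trans ?_
        · rintro ⟨i, i', j'⟩ _
          rw [card_le_one]
          intro x hx y hy
          simp only [mem_filter, mem_univ, true_and] at hx hy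
          by_contra hne
          exact hprop (b i) x y hx.1 hy.1 hne (hx.2.trans hy.2.symm)
        · simp only [card_univ, Fintype.card_prod, Fintype.card_fin]
          apply le_of_eq; ring
      have hle := (card_le_card hsub).trans ((card_union_le _ _).trans
        (Nat.add_le_add_left (card_union_le _ _) _))
      rw [card_univ] at hle
      have hD' : (m + 2) + (m + 2) ^ 3 ≤ D := le_trans (by gcongr <;> omega) hD
      omega
    calc _ = (auxn g c).card * (Fintype.card V - D) ^ m * (Fintype.card V - D) := by ring
      _ ≤ (auxT g m c).card * (Fintype.card V - D) := Nat.mul_le_mul_right _ ih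
      _ = ∑ b ∈ auxT g m c, (Fintype.card V - D) := by simp
      _ ≤ ∑ b ∈ auxT g m c, ((univ : Finset V).filter
          (fun v => (Fin.snoc b v : Fin (m + 1 + 2) → V) ∈ auxT g (m + 1) c)).card :=
          sum_le_sum hgood
      _ = _ := (card_sigma _ _).symm
      _ ≤ _ := by
        refine card_le_card_of_injOn (fun q => (Fin.snoc q.1 q.2 : Fin (m + 1 + 2) → V)) ?_ ?_
        · rintro ⟨b, v⟩ h
          simp only [coe_sigma, Set.mem_sigma_iff, mem_coe, mem_filter, mem_univ, true_and] at h
          exact h.2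
        · rintro ⟨b, v⟩ _ ⟨b', v'⟩ _ h
          have h1 := congrArg (Fin.init (α := fun _ => V)) h
          have h2 := congrFun h (Fin.last _)
          simp only [Fin.init_snoc, Fin.snoc_last] at h1 h2
          rw [h1, h2]

open Classical in
/-- available tuples with first colour `c` -/
noncomputable def auxX {V C : Type} [Fintype V] [DecidableEq C] (g : V → V → C) (m : ℕ) (c : C)
    (R : Finset C) : Finset (Fin (m + 2) → V) :=
  (auxT g m c).filter (fun b => (auxcols g b).erase c ⊆ R)

lemma aux_perm (m : ℕ) (i j : Fin (m + 2)) (hij : i ≠ j) :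
    ∃ σ : Equiv.Perm (Fin (m + 2)), σ 0 = i ∧ σ 1 = j := by
  refine ⟨(Equiv.swap 0 i).trans (Equiv.swap (Equiv.swap 0 i 1) j), ?_, ?_⟩
  · simp only [Equiv.trans_apply, Equiv.swap_apply_left]
    refine Equiv.swap_apply_of_ne_of_ne ?_ hij
    intro h
    have : Equiv.swap 0 i 0 = Equiv.swap 0 i 1 := by rw [Equiv.swap_apply_left]; exact h
    have := (Equiv.swap 0 i).injective this
    simp at this
  · simp

open Classical in
noncomputable def auxAv {V C : Type} [Fintype V] [DecidableEq C] (g : V → V → C) (m : ℕ)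
    (R : Finset C) : Finset (Fin (m + 2) → V) :=
  univ.filter (fun b => auxRB g b ∧ auxcols g b ⊆ R)

open Classical in
lemma aux_sym {V C : Type} [Fintype V] [DecidableEq C] (g : V → V → C)
    (hsymm : ∀ x y, g x y = g y x) (m : ℕ) (c : C) (R : Finset C) (hc : c ∈ R)
    (i j : Fin (m + 2)) (hij : i ≠ j) :
    (auxX g m c R).card ≤ ((auxAv g m R).filter (fun b => g (b i) (b j) = c)).card := by
  obtain ⟨σ, h0, h1⟩ := aux_perm m i j hij
  refine card_le_card_of_injOn (fun b => b ∘ σ.symm) ?_ ?_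
  · intro b hb
    simp only [auxX, auxT, coe_filter, mem_filter, mem_univ, true_and, Set.mem_ofPred_eq] at hb
    obtain ⟨⟨hrb, hc1⟩, hsub⟩ := hb
    simp only [auxAv, coe_filter, mem_filter, mem_univ, true_and, Set.mem_ofPred_eq]
    refine ⟨⟨⟨hrb.1.comp σ.symm.injective, ?_⟩, ?_⟩, ?_⟩
    · intro a a' d d' h1 h2 h3
      have := hrb.2 _ _ _ _ (σ.symm.injective.ne h1) (σ.symm.injective.ne h2) h3
      simpa using this
    · intro x hx
      rw [aux_mem_cols g hsymm] at hx
      obtain ⟨a, a', hne, hx⟩ := hx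
      by_cases hxc : x = c
      · rw [hxc]; exact hc
      · apply hsub
        rw [mem_erase, aux_mem_cols g hsymm]
        exact ⟨hxc, _, _, σ.symm.injective.ne hne, hx⟩
    · have e0 : σ.symm i = 0 := by rw [← h0]; simp
      have e1 : σ.symm j = 1 := by rw [← h1]; simp
      simp only [Function.comp_apply, e0, e1]; exact hc1
  · intro b _ b' _ h
    funext x
    have := congrFun h (σ x)
    simpa using this

lemma aux_step {V C : Type} [Fintype V] [Fintype C] [DecidableEq C] (g : V → V → C)
    (hsymm : ∀ x y, g x y = g y x) (m : ℕ) (R U : Finset C) (hU : U ⊆ R) (hne : U.Nonempty)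
    (a B : ℝ) (ha : 0 < a) (hB : 0 < B) (haX : ∀ c ∈ U, a ≤ (auxX g m c R).card)
    (hBX : ∑ c, ((auxX g m c R).card : ℝ) ≤ B) :
    ∃ b : Fin (m + 2) → V, auxRB g b ∧ auxcols g b ⊆ R ∧
      ((auxPP (m + 2)).card * a / B) * U.card ≤ ((auxcols g b ∩ U).card : ℝ) := by
  classical
  set K := (auxPP (m + 2)).card with hK
  have h1 : (K : ℝ) * (a * U.card) ≤ ∑ b ∈ auxAv g m R, ((auxcols g b ∩ U).card : ℝ) := by
    have hb : ∀ b ∈ auxAv g m R, (∑ p ∈ auxPP (m + 2), ∑ c ∈ U,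
        if g (b p.1) (b p.2) = c then (1 : ℝ) else 0) ≤ ((auxcols g b ∩ U).card : ℝ) := by
      intro b hb
      simp only [auxAv, mem_filter, mem_univ, true_and] at hb
      have : ∀ p ∈ auxPP (m + 2), (∑ c ∈ U, if g (b p.1) (b p.2) = c then (1 : ℝ) else 0)
          = if g (b p.1) (b p.2) ∈ U then (1 : ℝ) else 0 := by
        intro p _; rw [Finset.sum_ite_eq]
      rw [sum_congr rfl this, ← sum_filter, sum_const, nsmul_eq_mul, mul_one]
      norm_cast
      refine card_le_card_of_injOn (fun p => g (b p.1) (b p.2)) ?_ ?_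
      · intro p hp
        simp only [coe_filter, Set.mem_ofPred_eq] at hp
        simp only [coe_inter, Set.mem_inter_iff, mem_coe]
        exact ⟨mem_image.2 ⟨p, hp.1, rfl⟩, hp.2⟩
      · exact (aux_injOn g b hb.1).mono (by intro p hp; simp at hp; exact hp.1)
    refine le_trans ?_ (sum_le_sum hb)
    rw [sum_comm]
    calc (K : ℝ) * (a * U.card) = ∑ p ∈ auxPP (m + 2), (a * U.card) := by simp [hK]
      _ ≤ _ := by
        refine sum_le_sum fun p hp => ?_
        rw [sum_comm]
        calc a * U.card = ∑ c ∈ U, a := by simp [mul_comm]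
          _ ≤ _ := by
            refine sum_le_sum fun c hc => (haX c hc).trans ?_
            simp only [auxPP, mem_filter] at hp
            have := aux_sym g hsymm m c R (hU hc) p.1 p.2 hp.2.ne
            rw [← sum_filter, sum_const, nsmul_eq_mul, mul_one]
            exact_mod_cast this
  have h2 : ((auxAv g m R).card : ℝ) ≤ B := by
    refine le_trans ?_ hBX
    rw [card_eq_sum_card_fiberwise (f := fun b => g (b 0) (b 1)) (t := univ) (by intro x _; simp)]
    push_cast
    refine sum_le_sum fun c _ => ?_
    norm_cast
    apply card_le_card
    intro b hb
    simp only [auxAv, mem_filter, mem_univ, true_and] at hb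
    simp only [auxX, auxT, mem_filter, mem_univ, true_and]
    exact ⟨⟨hb.1.1, hb.2⟩, (erase_subset _ _).trans hb.1.2⟩
  by_contra hcon
  push Not at hcon
  have hUpos : (0 : ℝ) < U.card := by exact_mod_cast hne.card_pos
  have hAv : (auxAv g m R).Nonempty := by
    obtain ⟨c, hc⟩ := hne
    have h3 := haX c hc
    have h4 := aux_sym g hsymm m c R (hU hc) 0 1 (by simp)
    have h5 : 0 < ((auxAv g m R).filter (fun b => g (b 0) (b 1) = c)).card := by
      have : (0 : ℝ) < (auxX g m c R).card := lt_of_lt_of_le ha h3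
      have : 0 < (auxX g m c R).card := by exact_mod_cast this
      omega
    obtain ⟨b, hb⟩ := card_pos.1 h5
    exact ⟨b, (mem_filter.1 hb).1⟩
  have h6 : ∑ b ∈ auxAv g m R, ((auxcols g b ∩ U).card : ℝ) <
      ∑ b ∈ auxAv g m R, (K * a / B) * (U.card : ℝ) := by
    refine sum_lt_sum_of_nonempty hAv fun b hb => ?_
    simp only [auxAv, mem_filter, mem_univ, true_and] at hb
    exact hcon b hb.1 hb.2
  rw [sum_const, nsmul_eq_mul] at h6
  have h7 : ((auxAv g m R).card : ℝ) * ((K * a / B) * (U.card : ℝ)) ≤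
      B * ((K * a / B) * (U.card : ℝ)) := by gcongr
  have h8 : B * ((K * a / B) * (U.card : ℝ)) = K * (a * U.card) := by field_simp
  linarith

lemma aux_greedy {α C : Type} [DecidableEq C] [DecidableEq α] (col : α → Finset C) (F : α → Prop)
    (G : Finset C) (θ : ℝ) (hθ : θ ≤ 1)
    (h : ∀ U ⊆ G, U.Nonempty → ∃ A, F A ∧ θ * U.card ≤ ((col A ∩ U).card : ℝ)) (q : ℕ) :
    ∃ 𝒞 : Finset α, 𝒞.card ≤ q ∧ (∀ A ∈ 𝒞, F A) ∧
      ((G \ 𝒞.biUnion col).card : ℝ) ≤ (1 - θ) ^ q * G.card := by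
  induction q with
  | zero => exact ⟨∅, by simp, by simp, by simp⟩
  | succ q ih =>
    obtain ⟨𝒞, h1, h2, h3⟩ := ih
    by_cases hU : (G \ 𝒞.biUnion col).Nonempty
    · obtain ⟨A, hA, hA2⟩ := h _ sdiff_subset hU
      refine ⟨insert A 𝒞, (card_insert_le _ _).trans (by omega), ?_, ?_⟩
      · intro A' hA'
        rcases mem_insert.1 hA' with rfl | h'
        · exact hA
        · exact h2 A' h'
      · have e : G \ (insert A 𝒞).biUnion col = (G \ 𝒞.biUnion col) \ (col A) := by
          ext x; simp only [mem_sdiff, biUnion_insert, mem_union]; tauto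
        rw [e]
        have h4 := card_sdiff_add_card_inter (G \ 𝒞.biUnion col) (col A)
        rw [inter_comm] at h4
        have h5 : (((G \ 𝒞.biUnion col) \ (col A)).card : ℝ) +
          ((col A ∩ (G \ 𝒞.biUnion col)).card : ℝ) = ((G \ 𝒞.biUnion col).card : ℝ) := by
          exact_mod_cast h4
        calc _ ≤ (1 - θ) * ((G \ 𝒞.biUnion col).card : ℝ) := by linarith
          _ ≤ (1 - θ) * ((1 - θ) ^ q * G.card) := by
              apply mul_le_mul_of_nonneg_left h3; linarith
          _ = _ := by ring
    · rw [not_nonempty_iff_eq_empty] at hU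
      refine ⟨𝒞, by omega, h2, ?_⟩
      rw [hU]
      have : 0 ≤ 1 - θ := by linarith
      simp only [card_empty, Nat.cast_zero]
      positivity

end aux4
section aux5
open Finset

lemma aux_markov {β : Type} [Fintype β] (Z : β → ℝ) (hZ : ∀ x, 0 ≤ Z x) (z ε : ℝ) (hz : 0 < z)
    (hε : 0 < ε) (h : ∑ x, Z x ≤ Fintype.card β * z) :
    (1 - ε) * Fintype.card β ≤ (({x | Z x ≤ z / ε} : Set β).ncard : ℝ) := by
  classical
  have h0 : ({x | Z x ≤ z / ε} : Set β) = ((univ.filter (fun x => Z x ≤ z / ε) : Finset β) : Set β) := by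
    ext; simp
  rw [h0, Set.ncard_coe_finset]
  have h1 := card_filter_add_card_filter_not (s := (univ : Finset β)) (fun x => Z x ≤ z / ε)
  have h2 : ((univ.filter (fun x => ¬ Z x ≤ z / ε)).card : ℝ) * (z / ε) ≤ Fintype.card β * z := by
    refine le_trans ?_ h
    rw [← nsmul_eq_mul, ← sum_const]
    calc _ ≤ ∑ x ∈ univ.filter (fun x => ¬ Z x ≤ z / ε), Z x := by
          refine sum_le_sum fun x hx => ?_
          simp only [mem_filter, not_le] at hx
          exact hx.2.le
      _ ≤ _ := sum_le_sum_of_subset_of_nonneg (filter_subset _ _) fun x _ _ => hZ x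
  have h3 : ((univ.filter (fun x => ¬ Z x ≤ z / ε)).card : ℝ) ≤ ε * Fintype.card β := by
    rw [mul_div_assoc', div_le_iff₀ hε] at h2
    have : ((univ.filter (fun x => ¬ Z x ≤ z / ε)).card : ℝ) * z ≤ ε * Fintype.card β * z := by
      linarith
    exact le_of_mul_le_mul_right this hz
  have h4 : ((univ.filter (fun x => Z x ≤ z / ε)).card : ℝ) +
    ((univ.filter (fun x => ¬ Z x ≤ z / ε)).card : ℝ) = Fintype.card β := by
    rw [← card_univ]; exact_mod_cast h1
  linarith

lemma aux_cols_card {V C : Type} [DecidableEq C] (g : V → V → C) {k : ℕ} (b : Fin k → V)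
    (hb : auxRB g b) : (auxcols g b).card = (auxPP k).card :=
  card_image_of_injOn (aux_injOn g b hb)

lemma aux_event {V C : Type} [Fintype V] [Fintype C] [DecidableEq C] (g : V → V → C)
    (hsymm : ∀ x y, g x y = g y x)
    (hprop : ∀ x y z, x ≠ y → x ≠ z → y ≠ z → g x y ≠ g x z)
    (m h D : ℕ) (hm : m + 3 = 2 * h) (hD : (m + 2) + (m + 2) ^ 3 ≤ D) (hDN : D < Fintype.card V)
    (hn : ∀ c, 0 < (auxn g c).card) (hC : 0 < Fintype.card C)
    (ρ ε : ℝ) (hρ : 0 < ρ) (hε : 0 < ε)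
    (hρ2 : ((Fintype.card V : ℝ) + (m + 2) * (auxPP (m + 2)).card * 2 ^ h) ^ m
      ≤ (1 + ρ) * (((Fintype.card V - D : ℕ) : ℝ)) ^ m) :
    (1 - ε) * 2 ^ (Fintype.card C) ≤
      (({R | ∑ c, ((auxX g m c R).card / ((auxT g m c).card / 2 ^ ((auxPP (m + 2)).card - 1)) - 1 : ℝ) ^ 2
        ≤ ρ * Fintype.card C / ε} : Set (Finset C)).ncard : ℝ) := by
  classical
  have hcardF : (Fintype.card (Finset C) : ℝ) = 2 ^ (Fintype.card C) := by
    rw [Fintype.card_finset]; push_cast; rfl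
  rw [← hcardF]
  apply aux_markov _ (fun R => sum_nonneg fun c _ => sq_nonneg _) _ _ (by positivity) hε
  rw [sum_comm, hcardF]
  have key : ∀ c ∈ (univ : Finset C), ∑ R : Finset C,
      (((auxX g m c R).card : ℝ) / ((auxT g m c).card / 2 ^ ((auxPP (m + 2)).card - 1)) - 1) ^ 2
      ≤ 2 ^ (Fintype.card C) * ρ := by
    intro c _
    have hlow := aux_lower g hsymm hprop c D m hD
    have hTpos : (0 : ℝ) < (auxT g m c).card := by
      have : 0 < (auxn g c).card * (Fintype.card V - D) ^ m :=
        Nat.mul_pos (hn c) (pow_pos (by omega) m)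
      exact_mod_cast lt_of_lt_of_le this hlow
    set s := (auxPP (m + 2)).card - 1 with hs
    have hcmem : ∀ b ∈ auxT g m c, c ∈ auxcols g b := by
      intro b hb
      simp only [auxT, mem_filter, mem_univ, true_and] at hb
      rw [aux_mem_cols g hsymm]
      exact ⟨0, 1, by simp, hb.2⟩
    have hcc : ∀ b ∈ auxT g m c, (auxcols g b).card = (auxPP (m + 2)).card := by
      intro b hb
      simp only [auxT, mem_filter, mem_univ, true_and] at hb
      exact aux_cols_card g b hb.1
    have h2 := aux_second_moment (auxT g m c) (fun b => (auxcols g b).erase c) s (by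
      intro b hb
      rw [card_erase_of_mem (hcmem b hb), hcc b hb]) ρ (by
      intro b hb
      refine (aux_overlap g hsymm hprop m h hm c (auxcols g b) (hcmem b hb)).trans ?_
      rw [hcc b hb]
      calc _ ≤ ((auxn g c).card : ℝ) * ((1 + ρ) * (((Fintype.card V - D : ℕ) : ℝ)) ^ m) := by gcongr
        _ = (1 + ρ) * (((auxn g c).card * (Fintype.card V - D) ^ m : ℕ) : ℝ) := by push_cast; ring
        _ ≤ _ := by gcongr)
    set μ : ℝ := (auxT g m c).card / 2 ^ s with hμ
    have hμpos : 0 < μ := by positivity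
    have e : ∀ R : Finset C, (((auxX g m c R).card : ℝ) / μ - 1) ^ 2
        = (((auxX g m c R).card : ℝ) - μ) ^ 2 / μ ^ 2 := by
      intro R; field_simp
    simp_rw [e]
    rw [← sum_div, div_le_iff₀ (by positivity)]
    have h3 : ∑ R : Finset C, (((auxX g m c R).card : ℝ) - μ) ^ 2
        ≤ 2 ^ Fintype.card C * (ρ * μ ^ 2) := by
      refine le_trans (le_of_eq ?_) h2
      refine sum_congr rfl fun R _ => ?_
      unfold auxX
      congr!
    calc _ ≤ _ := h3
      _ = _ := by ring
  calc _ ≤ ∑ c : C, (2 : ℝ) ^ (Fintype.card C) * ρ := sum_le_sum key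
    _ = _ := by rw [sum_const, card_univ, nsmul_eq_mul]; ring

/-- availability -/
def auxF {V C : Type} (g : V → V → C) (R : Finset C) (A : Finset V) : Prop :=
  (∀ x ∈ A, ∀ y ∈ A, ∀ z ∈ A, ∀ w ∈ A, x ≠ y → z ≠ w →
    ¬(x = z ∧ y = w) → ¬(x = w ∧ y = z) → g x y ≠ g z w) ∧
  (∀ x ∈ A, ∀ y ∈ A, x ≠ y → g x y ∈ R)

open Classical in
noncomputable def auxcol {V C : Type} [Fintype C] (g : V → V → C) (A : Finset V) : Finset C :=
  univ.filter (fun c => ∃ x ∈ A, ∃ y ∈ A, x ≠ y ∧ g x y = c)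

lemma aux_det {V C : Type} [Fintype V] [DecidableEq V] [Fintype C] [DecidableEq C] (g : V → V → C)
    (hsymm : ∀ x y, g x y = g y x)
    (hprop : ∀ x y z, x ≠ y → x ≠ z → y ≠ z → g x y ≠ g x z)
    (m h D : ℕ) (hm : m + 3 = 2 * h) (hD : (m + 2) + (m + 2) ^ 3 ≤ D) (hDN : D < Fintype.card V)
    (hn1 : ∀ c, 99 / 100 * (Fintype.card V : ℝ) ≤ (auxn g c).card)
    (hn2 : ∀ c, ((auxn g c).card : ℝ) ≤ 101 / 100 * (Fintype.card V : ℝ))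
    (hC : 0 < Fintype.card C) (hC2 : 99 / 100 * (Fintype.card C : ℝ) ≤ Fintype.card V)
    (ρ Δ : ℝ) (hρ : 0 < ρ) (hρ1 : ρ ≤ 1 / 100) (hΔ : 0 ≤ Δ) (hΔ1 : Δ ≤ 1 / 10000)
    (hρ2 : ((Fintype.card V : ℝ) + (m + 2) * (auxPP (m + 2)).card * 2 ^ h) ^ m
      ≤ (1 + ρ) * (((Fintype.card V - D : ℕ) : ℝ)) ^ m)
    (R : Finset C)
    (hR : ∑ c, ((auxX g m c R).card / ((auxT g m c).card / 2 ^ ((auxPP (m + 2)).card - 1)) - 1 : ℝ) ^ 2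
        ≤ Δ * Fintype.card C)
    (θ : ℝ) (hθ : θ = 93 / 100 * (auxPP (m + 2)).card / Fintype.card V) (hθ1 : θ ≤ 1) (q : ℕ) :
    ∃ 𝒞 : Finset (Finset V), (𝒞.card : ℝ) ≤ q + (1 - θ) ^ q * Fintype.card C
        + 10000 * Δ * Fintype.card C ∧
      (∀ A ∈ 𝒞, auxF g R A) ∧ R = 𝒞.biUnion (auxcol g) := by
  classical
  set K := (auxPP (m + 2)).card with hK
  set N := Fintype.card V with hN
  set n := Fintype.card C with hnn
  have hNpos : (0 : ℝ) < N := by exact_mod_cast (by omega : 0 < N)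
  have hnpos : (0 : ℝ) < n := by exact_mod_cast hC
  set P : ℝ := ((N - D : ℕ) : ℝ) ^ m with hP
  have hPpos : 0 < P := by
    have : (0 : ℝ) < ((N - D : ℕ) : ℝ) := by exact_mod_cast (by omega : 0 < N - D)
    positivity
  set s := K - 1
  have hlo : ∀ c, 99 / 100 * N * P ≤ (auxT g m c).card := by
    intro c
    have := aux_lower g hsymm hprop c D m hD
    calc 99 / 100 * N * P ≤ (auxn g c).card * P := by gcongr; exact hn1 c
      _ = (((auxn g c).card * (N - D) ^ m : ℕ) : ℝ) := by push_cast; rfl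
      _ ≤ _ := by exact_mod_cast this
  have hKpos : 1 ≤ K := by
    apply card_pos.2
    exact ⟨(0, 1), by simp [auxPP]⟩
  have hhi : ∀ c, ((auxT g m c).card : ℝ) ≤ 101 / 100 * N * ((1 + ρ) * P) := by
    intro c
    have := aux_overlap g hsymm hprop m h hm c {c} (by simp)
    calc ((auxT g m c).card : ℝ) = ∑ b ∈ auxT g m c, (1 : ℝ) := by simp
      _ ≤ _ := sum_le_sum fun b _ => one_le_pow₀ (by norm_num)
      _ ≤ _ := this
      _ ≤ ((auxn g c).card : ℝ) * ((N : ℝ) + (m + 2) * K * 2 ^ h) ^ m := by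
          gcongr
          simpa using hKpos
      _ ≤ _ := by gcongr; exact hn2 c
  set μ : C → ℝ := fun c => (auxT g m c).card / 2 ^ s with hμ
  set Y : C → ℝ := fun c => (auxX g m c R).card / μ c - 1 with hY
  have hYs : ∑ c, Y c ^ 2 ≤ Δ * n := hR
  have hμlo : ∀ c, 99 / 100 * N * P / 2 ^ s ≤ μ c := fun c => by
    simp only [hμ]; gcongr; exact hlo c
  have hμhi : ∀ c, μ c ≤ 101 / 100 * N * ((1 + ρ) * P) / 2 ^ s := fun c => by
    simp only [hμ]; gcongr; exact hhi c
  have hμpos : ∀ c, 0 < μ c := fun c => lt_of_lt_of_le (by positivity) (hμlo c)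
  have hXY : ∀ c, ((auxX g m c R).card : ℝ) = μ c * (1 + Y c) := by
    intro c; simp only [hY]; have := (hμpos c).ne'; field_simp; ring
  set G := R.filter (fun c => -(1 / 100) ≤ Y c) with hG
  set a : ℝ := 99 / 100 * (99 / 100 * N * P / 2 ^ s) with ha
  set B : ℝ := 101 / 100 * N * ((1 + ρ) * P) / 2 ^ s * (n * (102 / 100)) with hB
  have hapos : 0 < a := by positivity
  have hBpos : 0 < B := by positivity
  have haX : ∀ c ∈ G, a ≤ (auxX g m c R).card := by
    intro c hc
    rw [hXY, ha, mul_comm]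
    have h1 := (mem_filter.1 hc).2
    exact mul_le_mul (hμlo c) (by linarith) (by norm_num) (hμpos c).le
  have hBX : ∑ c, ((auxX g m c R).card : ℝ) ≤ B := by
    have h1 : ∀ c ∈ (univ : Finset C), ((auxX g m c R).card : ℝ) ≤
        101 / 100 * N * ((1 + ρ) * P) / 2 ^ s * (101 / 100 + 100 * Y c ^ 2) := by
      intro c _
      rw [hXY]
      have h2 : 1 + Y c ≤ 101 / 100 + 100 * Y c ^ 2 := by nlinarith [sq_nonneg (Y c - 1 / 200)]
      calc _ ≤ μ c * (101 / 100 + 100 * Y c ^ 2) :=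
            mul_le_mul_of_nonneg_left h2 (hμpos c).le
        _ ≤ _ := by gcongr; exact hμhi c
    refine (sum_le_sum h1).trans ?_
    rw [← mul_sum, hB]
    gcongr
    rw [sum_add_distrib, ← mul_sum, sum_const, card_univ, nsmul_eq_mul]
    nlinarith
  have hθ2 : θ ≤ K * a / B := by
    have : (K : ℝ) * a / B = K * (99 / 100) * (99 / 100) / (101 / 100 * (1 + ρ) * (n * (102 / 100))) := by
      rw [ha, hB]; field_simp
    rw [this, hθ, div_le_div_iff₀ hNpos (by positivity)]
    have h1 : 101 / 100 * (1 + ρ) * (n * (102 / 100)) ≤ 101 / 100 * (101 / 100) * (N / (99 / 100) * (102 / 100)) := by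
      gcongr
      · linarith
      · rw [le_div_iff₀ (by norm_num)]; linarith
    calc _ ≤ 93 / 100 * (K : ℝ) * (101 / 100 * (101 / 100) * (N / (99 / 100) * (102 / 100))) :=
          mul_le_mul_of_nonneg_left h1 (mul_nonneg (by norm_num) (Nat.cast_nonneg _))
      _ = (K * N : ℝ) * (93 / 100 * (101 / 100 * (101 / 100) * (1 / (99 / 100) * (102 / 100)))) := by ring
      _ ≤ (K * N : ℝ) * (99 / 100 * (99 / 100)) :=
          mul_le_mul_of_nonneg_left (by norm_num)
            (mul_nonneg (Nat.cast_nonneg _) (Nat.cast_nonneg _))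
      _ = _ := by ring
  have hFb : ∀ b : Fin (m + 2) → V, auxRB g b → auxcols g b ⊆ R →
      auxF g R (univ.image b) ∧ auxcol g (univ.image b) = auxcols g b := by
    intro b hb hbR
    refine ⟨⟨?_, ?_⟩, ?_⟩
    · intro x hx y hy z hz w hw hxy hzw h1 h2 he
      simp only [mem_image, mem_univ, true_and] at hx hy hz hw
      obtain ⟨i, rfl⟩ := hx
      obtain ⟨j, rfl⟩ := hy
      obtain ⟨i', rfl⟩ := hz
      obtain ⟨j', rfl⟩ := hw
      rcases hb.2 i j i' j' (fun e => hxy (by rw [e])) (fun e => hzw (by rw [e])) he with h | h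
      · exact h1 ⟨by rw [h.1], by rw [h.2]⟩
      · exact h2 ⟨by rw [h.1], by rw [h.2]⟩
    · intro x hx y hy hxy
      simp only [mem_image, mem_univ, true_and] at hx hy
      obtain ⟨i, rfl⟩ := hx
      obtain ⟨j, rfl⟩ := hy
      apply hbR
      rw [aux_mem_cols g hsymm]
      exact ⟨i, j, fun e => hxy (by rw [e]), rfl⟩
    · ext c
      rw [aux_mem_cols g hsymm]
      simp only [auxcol, mem_filter, mem_univ, true_and, mem_image]
      constructor
      · rintro ⟨_, ⟨i, rfl⟩, _, ⟨j, rfl⟩, hne, he⟩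
        exact ⟨i, j, fun e => hne (by rw [e]), he⟩
      · rintro ⟨i, j, hne, he⟩
        exact ⟨_, ⟨i, rfl⟩, _, ⟨j, rfl⟩, hb.1.ne hne, he⟩
  obtain ⟨𝒞, h1, h2, h3⟩ := aux_greedy (auxcol g) (auxF g R) G θ hθ1 (by
    intro U hU hUne
    obtain ⟨b, hb1, hb2, hb3⟩ := aux_step g hsymm m R U (hU.trans (filter_subset _ _)) hUne a B
      hapos hBpos (fun c hc => haX c (hU hc)) hBX
    obtain ⟨f1, f2⟩ := hFb b hb1 hb2
    refine ⟨univ.image b, f1, ?_⟩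
    rw [f2]
    exact le_trans (mul_le_mul_of_nonneg_right hθ2 (Nat.cast_nonneg _)) hb3) q
  set Lf := R \ 𝒞.biUnion (auxcol g) with hLf
  have hedge : ∀ c : C, ∃ x y : V, x ≠ y ∧ g x y = c := by
    intro c
    have : (0 : ℝ) < (auxn g c).card := lt_of_lt_of_le (by positivity) (hn1 c)
    have : 0 < (auxn g c).card := by exact_mod_cast this
    obtain ⟨p, hp⟩ := card_pos.1 this
    simp only [auxn, mem_filter, mem_univ, true_and] at hp
    exact ⟨p.1, p.2, hp⟩
  choose ex ey hne hgc using hedge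
  have hcole : ∀ c, auxcol g {ex c, ey c} = {c} := by
    intro c
    ext d
    simp only [auxcol, mem_filter, mem_univ, true_and, mem_insert, mem_singleton]
    constructor
    · rintro ⟨x, hx, y, hy, hxy, rfl⟩
      rcases hx with rfl | rfl <;> rcases hy with rfl | rfl
      · exact absurd rfl hxy
      · exact hgc c
      · rw [hsymm]; exact hgc c
      · exact absurd rfl hxy
    · rintro rfl
      exact ⟨_, Or.inl rfl, _, Or.inr rfl, hne d, hgc d⟩
  refine ⟨𝒞 ∪ Lf.image (fun c => {ex c, ey c}), ?_, ?_, ?_⟩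
  · have hLcard : (Lf.card : ℝ) ≤ (1 - θ) ^ q * n + 10000 * Δ * n := by
      have hsub : Lf ⊆ (G \ 𝒞.biUnion (auxcol g)) ∪ univ.filter (fun c => ¬ (-(1 / 100) ≤ Y c)) := by
        intro c hc
        simp only [hLf, mem_sdiff] at hc
        simp only [mem_union, mem_sdiff, hG, mem_filter, mem_univ, true_and]
        by_cases h : -(1 / 100) ≤ Y c
        · left; exact ⟨⟨hc.1, h⟩, hc.2⟩
        · right; exact h
      have hbad : ((univ.filter (fun c => ¬ (-(1 / 100) ≤ Y c))).card : ℝ) ≤ 10000 * Δ * n := by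
        have : ((univ.filter (fun c => ¬ (-(1 / 100) ≤ Y c))).card : ℝ) * (1 / 10000) ≤ Δ * n := by
          refine le_trans ?_ hYs
          rw [← nsmul_eq_mul, ← sum_const]
          calc _ ≤ ∑ c ∈ univ.filter (fun c => ¬ (-(1 / 100) ≤ Y c)), Y c ^ 2 := by
                refine sum_le_sum fun c hc => ?_
                have := (mem_filter.1 hc).2
                push Not at this
                nlinarith
            _ ≤ _ := sum_le_sum_of_subset_of_nonneg (filter_subset _ _) fun _ _ _ => sq_nonneg _
        linarith
      have hGn : (G.card : ℝ) ≤ n := by exact_mod_cast card_le_univ G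
      have hcard := (card_le_card hsub).trans (card_union_le _ _)
      calc (Lf.card : ℝ) ≤ ((G \ 𝒞.biUnion (auxcol g)).card : ℝ) +
            ((univ.filter (fun c => ¬ (-(1 / 100) ≤ Y c))).card : ℝ) := by exact_mod_cast hcard
        _ ≤ (1 - θ) ^ q * G.card + 10000 * Δ * n := add_le_add h3 hbad
        _ ≤ _ := by
          have : 0 ≤ 1 - θ := by linarith
          gcongr
    have hc := (card_union_le 𝒞 (Lf.image (fun c => ({ex c, ey c} : Finset V)))).trans
      (Nat.add_le_add h1 card_image_le)
    have hc' : (((𝒞 ∪ Lf.image (fun c => ({ex c, ey c} : Finset V))).card : ℕ) : ℝ) ≤ q + Lf.card := by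
      exact_mod_cast hc
    linarith
  · intro A hA
    rcases mem_union.1 hA with hA | hA
    · exact h2 A hA
    · obtain ⟨c, hc, rfl⟩ := mem_image.1 hA
      have hcR : c ∈ R := (mem_sdiff.1 hc).1
      constructor
      · intro x hx y hy z hz w hw hxy hzw q1 q2
        simp only [mem_insert, mem_singleton] at hx hy hz hw
        exfalso
        rcases hx with rfl | rfl <;> rcases hy with rfl | rfl <;> rcases hz with rfl | rfl <;>
          rcases hw with rfl | rfl <;>
          first
          | exact hxy rfl
          | exact hzw rfl
          | exact q1 ⟨rfl, rfl⟩
          | exact q2 ⟨rfl, rfl⟩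
      · intro x hx y hy hxy
        have : g x y ∈ auxcol g {ex c, ey c} := by
          simp only [auxcol, mem_filter, mem_univ, true_and]
          exact ⟨x, hx, y, hy, hxy, rfl⟩
        rw [hcole] at this
        rw [mem_singleton.1 this]; exact hcR
  · ext c
    simp only [mem_biUnion, mem_union, mem_image]
    constructor
    · intro hc
      by_cases hcc : c ∈ 𝒞.biUnion (auxcol g)
      · obtain ⟨A, hA, hA2⟩ := mem_biUnion.1 hcc
        exact ⟨A, Or.inl hA, hA2⟩
      · exact ⟨_, Or.inr ⟨c, mem_sdiff.2 ⟨hc, hcc⟩, rfl⟩, by rw [hcole]; simp⟩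
    · rintro ⟨A, hA | ⟨d, hd, rfl⟩, hcA⟩
      · simp only [auxcol, mem_filter, mem_univ, true_and] at hcA
        obtain ⟨x, hx, y, hy, hxy, rfl⟩ := hcA
        exact (h2 A hA).2 x hx y hy hxy
      · rw [hcole, mem_singleton] at hcA
        rw [hcA]; exact (mem_sdiff.1 hd).1

end aux5
section aux6
open Filter

lemma aux_large (ε : ℝ) (hε : 0 < ε) : ∃ L₀ : ℝ, ∀ L : ℝ, L₀ ≤ L →
    1000 ≤ L ∧ 100000000 / ε ≤ L ∧ 100 ≤ Real.logb 2 L ∧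
    200 * L ^ 7 * (2 : ℝ) ^ (24 / 25 * L) ≤ 2 ^ L := by
  have h1 : ∀ᶠ L : ℝ in atTop, 1000 ≤ L := eventually_ge_atTop _
  have h2 : ∀ᶠ L : ℝ in atTop, 100000000 / ε ≤ L := eventually_ge_atTop _
  have h3 : ∀ᶠ L : ℝ in atTop, 100 ≤ Real.logb 2 L :=
    (Real.tendsto_logb_atTop (by norm_num)).eventually_ge_atTop _
  have hb : 0 < Real.log 2 / 25 := by have := Real.log_pos (by norm_num : (1 : ℝ) < 2); positivity
  have h4 := (isLittleO_pow_exp_pos_mul_atTop (k := 7) hb).bound (by norm_num : (0 : ℝ) < 1 / 200)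
  obtain ⟨L₀, h⟩ := eventually_atTop.1 (h1.and (h2.and (h3.and h4)))
  refine ⟨L₀, fun L hL => ?_⟩
  obtain ⟨a1, a2, a3, a4⟩ := h L hL
  refine ⟨a1, a2, a3, ?_⟩
  have hL0 : 0 ≤ L := by linarith
  rw [Real.norm_of_nonneg (by positivity), Real.norm_of_nonneg (by positivity)] at a4
  have e1 : (2 : ℝ) ^ L = 2 ^ (24 / 25 * L) * Real.exp (Real.log 2 / 25 * L) := by
    rw [Real.rpow_def_of_pos (by norm_num), Real.rpow_def_of_pos (by norm_num), ← Real.exp_add]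
    congr 1; ring
  rw [e1, mul_comm]
  have : (0 : ℝ) < 2 ^ (24 / 25 * L) := by positivity
  gcongr
  linarith

set_option maxHeartbeats 2000000 in
lemma aux_num (ε : ℝ) (hε : 0 < ε) : ∃ N₀ : ℕ, ∀ N : ℕ, N₀ ≤ N →
    ∃ (m h D q : ℕ) (ρ θ : ℝ), m + 3 = 2 * h ∧ (m + 2) + (m + 2) ^ 3 ≤ D ∧ D < N ∧
      0 < ρ ∧ ρ ≤ 1 / 100 ∧ ρ / ε ≤ 1 / 10000 ∧
      ((N : ℝ) + (m + 2) * (auxPP (m + 2)).card * 2 ^ h) ^ m ≤ (1 + ρ) * (((N - D : ℕ) : ℝ)) ^ m ∧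
      θ = 93 / 100 * (auxPP (m + 2)).card / N ∧ θ ≤ 1 ∧
      ∀ n : ℝ, 0 ≤ n → 99 / 100 * n ≤ N → q + (1 - θ) ^ q * n + 10000 * (ρ / ε) * n ≤
        N * Real.logb 2 (Real.logb 2 N) / (Real.logb 2 N) ^ 2 := by
  obtain ⟨L₀, hL₀⟩ := aux_large ε hε
  have htend : Tendsto (fun N : ℕ => Real.logb 2 (N : ℝ)) atTop atTop :=
    (Real.tendsto_logb_atTop (by norm_num)).comp tendsto_natCast_atTop_atTop
  obtain ⟨N₀, hN₀⟩ := eventually_atTop.1 ((htend.eventually_ge_atTop L₀).and (eventually_ge_atTop 1))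
  refine ⟨N₀, fun N hN => ?_⟩
  obtain ⟨hN1, hN2⟩ := hN₀ N hN
  set L := Real.logb 2 (N : ℝ) with hLdef
  obtain ⟨a1, a2, a3, a4⟩ := hL₀ L hN1
  set l := Real.logb 2 L with hl
  have hNpos : (0 : ℝ) < N := by exact_mod_cast hN2
  have h2L : (2 : ℝ) ^ L = N := Real.rpow_logb (by norm_num) (by norm_num) hNpos
  set Q : ℝ := 2 ^ (24 / 25 * L) with hQ
  rw [h2L] at a4
  have hLpos : 0 < L := by linarith
  have hQ1 : 1 ≤ Q := Real.one_le_rpow (by norm_num) (by positivity)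
  set h := ⌊24 / 25 * L⌋₊ with hh
  have hh1 : (h : ℝ) ≤ 24 / 25 * L := Nat.floor_le (by positivity)
  have hh2 : 24 / 25 * L < h + 1 := Nat.lt_floor_add_one _
  have hh3 : 2 ≤ h := by
    have : (2 : ℝ) ≤ h := by linarith
    exact_mod_cast this
  have h2h : (2 : ℝ) ^ h ≤ Q := by
    rw [← Real.rpow_natCast]
    exact Real.rpow_le_rpow_of_exponent_le (by norm_num) hh1
  obtain ⟨m, hm⟩ : ∃ m, m + 3 = 2 * h := ⟨2 * h - 3, by omega⟩
  set K := (auxPP (m + 2)).card with hK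
  have hmR : (m : ℝ) = 2 * h - 3 := by
    have : (m : ℝ) + 3 = 2 * h := by exact_mod_cast hm
    linarith
  have hKR : 2 * (K : ℝ) = (m + 2) * (m + 2) - (m + 2) := by
    have h1 := aux_card_PP (m + 2)
    have h2 : 2 * (auxPP (m + 2)).card + (m + 2) = (m + 2) * (m + 2) := by
      rw [h1]; exact Nat.sub_add_cancel (Nat.le_mul_self _)
    have h3 : 2 * (K : ℝ) + (m + 2) = (m + 2) * (m + 2) := by exact_mod_cast h2
    linarith
  have hK2 : (K : ℝ) = (2 * h - 1) * (h - 1) := by rw [hmR] at hKR; linarith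
  have hh4 : (2 : ℝ) ≤ h := by exact_mod_cast hh3
  have hKup : (K : ℝ) ≤ 2 * L ^ 2 := by rw [hK2]; nlinarith
  have hKlo : 18 / 10 * L ^ 2 ≤ K := by
    rw [hK2]
    have e1 : 48 / 25 * L - 3 ≤ 2 * (h : ℝ) - 1 := by linarith
    have e2 : 24 / 25 * L - 2 ≤ (h : ℝ) - 1 := by linarith
    have := mul_le_mul e1 e2 (by linarith) (by linarith)
    nlinarith
  have hm2 : (m : ℝ) + 2 ≤ 2 * L := by linarith
  have hm0 : (m : ℝ) ≤ 2 * L := by linarith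
  set D := (m + 2) + (m + 2) ^ 3 with hD
  have hDR : (D : ℝ) = (m + 2) + (m + 2) ^ 3 := by rw [hD]; push_cast; ring
  have hm2' : (0 : ℝ) ≤ (m : ℝ) + 2 := by positivity
  have hDup : (D : ℝ) ≤ 10 * L ^ 3 := by
    have e1 : ((m : ℝ) + 2) ^ 3 ≤ (2 * L) ^ 3 := pow_le_pow_left₀ hm2' hm2 3
    have e2 : L ≤ L ^ 3 := by
      calc L = L ^ 1 := (pow_one _).symm
        _ ≤ L ^ 3 := pow_le_pow_right₀ (by linarith) (by norm_num)
    rw [hDR]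
    nlinarith
  have hp7 : ∀ j, j ≤ 7 → L ^ j ≤ L ^ 7 := fun j hj => pow_le_pow_right₀ (by linarith) hj
  have hNL : 200 * L ^ 7 ≤ N := by
    have : 0 ≤ 200 * L ^ 7 := by positivity
    nlinarith
  have hL7 : 0 < L ^ 7 := by positivity
  have hDN : (D : ℝ) < N := by
    have := hp7 3 (by norm_num)
    linarith
  have hDN' : D < N := by exact_mod_cast hDN
  set W : ℝ := (m + 2) * K * 2 ^ h with hW
  have hWup : W ≤ 4 * L ^ 3 * Q := by
    calc W ≤ (2 * L) * (2 * L ^ 2) * Q := by rw [hW]; gcongr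
      _ = _ := by ring
  have hW0 : 0 ≤ W := by positivity
  have hL3 : 0 < L ^ 3 := by positivity
  set ρ : ℝ := 1 / L ^ 3 with hρ
  have hρpos : 0 < ρ := by positivity
  have hρ1 : ρ ≤ 1 / 100 := by
    rw [hρ]
    apply one_div_le_one_div_of_le (by norm_num)
    calc (100 : ℝ) ≤ L := by linarith
      _ = L ^ 1 := (pow_one _).symm
      _ ≤ L ^ 3 := pow_le_pow_right₀ (by linarith) (by norm_num)
  have hεL : 100000000 ≤ L * ε := by rwa [div_le_iff₀ hε] at a2
  have hρε : ρ / ε = 1 / (L ^ 2 * (L * ε)) := by rw [hρ]; field_simp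
  have hLε : 0 < L * ε := by positivity
  have hρε2 : ρ / ε ≤ 1 / L ^ 2 * (1 / 100000000) := by
    rw [hρε, one_div_mul_one_div]
    apply one_div_le_one_div_of_le (by positivity)
    gcongr
  have hL2 : 1 / L ^ 2 ≤ 1 := by
    rw [div_le_one (by positivity)]; exact one_le_pow₀ (by linarith)
  have hL2' : 0 < 1 / L ^ 2 := by positivity
  set θ : ℝ := 93 / 100 * K / N with hθ
  have hθ1 : θ ≤ 1 := by
    rw [hθ, div_le_one hNpos]
    have := hp7 2 (by norm_num)
    linarith
  have hθ0 : 0 ≤ θ := by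
    rw [hθ]; exact div_nonneg (mul_nonneg (by norm_num) (Nat.cast_nonneg _)) hNpos.le
  have hz : (m : ℝ) * ((W + D) / (N + W)) ≤ ρ / 2 := by
    have e1 : W + D ≤ 14 * L ^ 3 * Q := by nlinarith
    have e2 : (m : ℝ) * (W + D) ≤ (2 * L) * (14 * L ^ 3 * Q) := by gcongr
    calc (m : ℝ) * ((W + D) / (N + W)) = (m : ℝ) * (W + D) / (N + W) := by ring
      _ ≤ (2 * L) * (14 * L ^ 3 * Q) / (200 * L ^ 7 * Q) := by
          gcongr
          linarith
      _ = (28 / 200) * (1 / L ^ 3) := by field_simp; norm_num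
      _ ≤ ρ / 2 := by rw [← hρ]; linarith
  refine ⟨m, h, D, ⌊95 / 100 * (N * l / L ^ 2)⌋₊, ρ, θ, hm, le_rfl, hDN', hρpos, hρ1, ?_, ?_, rfl,
    hθ1, ?_⟩
  · nlinarith
  · have hNW : 0 < (N : ℝ) + W := by positivity
    have e1 : (((N - D : ℕ) : ℝ)) = (N + W) * (1 + -((W + D) / (N + W))) := by
      rw [Nat.cast_sub hDN'.le]; field_simp; ring
    rw [e1, mul_pow]
    have hle1 : (W + D) / (N + W) ≤ 1 := by rw [div_le_one hNW]; linarith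
    have e2 := one_add_mul_le_pow (a := -((W + D) / (N + W))) (by linarith) m
    have e3 : 1 ≤ (1 + ρ) * (1 + -((W + D) / (N + W))) ^ m := by
      have : 1 - ρ / 2 ≤ (1 + -((W + D) / (N + W))) ^ m := by nlinarith
      nlinarith
    have : 0 ≤ ((N : ℝ) + W) ^ m := by positivity
    nlinarith
  · intro n hn0 hn
    set q := ⌊95 / 100 * (N * l / L ^ 2)⌋₊ with hq
    have hlpos : 0 < l := by linarith
    have hq1 : (q : ℝ) ≤ 95 / 100 * (N * l / L ^ 2) := Nat.floor_le (by positivity)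
    have hq2 : 95 / 100 * (N * l / L ^ 2) < q + 1 := Nat.lt_floor_add_one _
    have hθlo : 1674 / 1000 * L ^ 2 / N ≤ θ := by
      rw [hθ]; exact div_le_div_of_nonneg_right (by linarith) hNpos.le
    have hθq : 159 / 100 * l - 1 ≤ θ * q := by
      have e1 : θ * (95 / 100 * (N * l / L ^ 2)) ≤ θ * (q + 1) := by gcongr
      have e2 : (1674 / 1000 * L ^ 2 / N) * (95 / 100 * (N * l / L ^ 2)) ≤
        θ * (95 / 100 * (N * l / L ^ 2)) := by gcongr
      have e3 : (1674 / 1000 * L ^ 2 / N) * (95 / 100 * (N * l / L ^ 2)) =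
        1674 / 1000 * (95 / 100) * l := by field_simp
      nlinarith
    have hlogL : 0 ≤ Real.log L := Real.log_nonneg (by linarith)
    have hll : 2 * Real.log L ≤ 159 / 100 * l := by
      have e1 : l * Real.log 2 = Real.log L := by
        rw [hl, Real.logb]; field_simp
      have := Real.log_two_lt_d9
      nlinarith
    have hexp : (1 - θ) ^ q ≤ 3 / L ^ 2 := by
      calc (1 - θ) ^ q ≤ (Real.exp (-θ)) ^ q := by
            apply pow_le_pow_left₀ (by linarith)
            have := Real.add_one_le_exp (-θ); linarith
        _ = Real.exp (-(θ * q)) := by rw [← Real.exp_nat_mul]; congr 1; ring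
        _ ≤ Real.exp (1 - 2 * Real.log L) := Real.exp_le_exp.2 (by linarith)
        _ = Real.exp 1 / L ^ 2 := by
            rw [Real.exp_sub, two_mul, Real.exp_add, Real.exp_log hLpos, sq]
        _ ≤ 3 / L ^ 2 := by gcongr; have := Real.exp_one_lt_d9; linarith
    have hn' : n ≤ 102 / 100 * N := by linarith
    calc (q : ℝ) + (1 - θ) ^ q * n + 10000 * (ρ / ε) * n
        ≤ 95 / 100 * (N * l / L ^ 2) + (3 / L ^ 2) * (102 / 100 * N)
          + 10000 * (1 / L ^ 2 * (1 / 100000000)) * (102 / 100 * N) := by gcongr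
      _ = (N / L ^ 2) * (95 / 100 * l + 3 * (102 / 100) + 10000 * (1 / 100000000) * (102 / 100)) := by
          ring
      _ ≤ (N / L ^ 2) * l := by
          apply mul_le_mul_of_nonneg_left _ (by positivity)
          linarith
      _ = _ := by ring

end aux6
lemma aux_card_n {N : ℕ} {C : Type} (g : Fin N → Fin N → C) (hsymm : ∀ x y, g x y = g y x) (c : C) :
    (auxn g c).card = 2 * ({p : Fin N × Fin N | p.1 < p.2 ∧ g p.1 p.2 = c}.ncard) := by
  classical
  let E : Finset (Fin N × Fin N) := Finset.univ.filter (fun p => p.1 < p.2 ∧ g p.1 p.2 = c)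
  have h0 : ({p : Fin N × Fin N | p.1 < p.2 ∧ g p.1 p.2 = c} : Set _) = (E : Set _) := by
    ext; simp [E]
  rw [h0, Set.ncard_coe_finset]
  have h : E ∪ E.image Prod.swap = auxn g c := by
    ext ⟨a, b⟩
    simp only [E, auxn, Finset.mem_union, Finset.mem_filter, Finset.mem_univ, true_and,
      Finset.mem_image, Prod.exists, Prod.swap_prod_mk, Prod.mk.injEq]
    constructor
    · rintro (h | ⟨x, y, h, rfl, rfl⟩)
      · exact ⟨h.1.ne, h.2⟩
      · exact ⟨h.1.ne', by rw [hsymm]; exact h.2⟩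
    · intro h
      rcases lt_or_gt_of_ne h.1 with h1 | h1
      · exact Or.inl ⟨h1, h.2⟩
      · exact Or.inr ⟨b, a, ⟨h1, by rw [hsymm]; exact h.2⟩, rfl, rfl⟩
  rw [← h, Finset.card_union_of_disjoint, Finset.card_image_of_injective _ Prod.swap_injective]
  · ring
  · rw [Finset.disjoint_left]
    rintro ⟨a, b⟩ h1 h2
    simp only [E, Finset.mem_image, Finset.mem_filter, Finset.mem_univ, true_and, Prod.exists,
      Prod.swap_prod_mk, Prod.mk.injEq] at h1 h2
    obtain ⟨x, y, hxy, rfl, rfl⟩ := h2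
    exact absurd h1.1 (not_lt.mpr hxy.1.le)

/-- For every `ε > 0` there exist `δ > 0` and `N₀` such that for every `N ≥ N₀`
and every properly edge-colored complete graph on `N` vertices (edge-coloring
`g`, colors of type `C`) in which every color appears on at least `(1−δ)·N/2`
and at most `(1+δ)·N/2` edges, the following holds. If `R` is a uniformly random
subset of the colors, then with probability at least `1 − ε` there is a
collection `𝒞` of at most `N·log₂ log₂ N / (log₂ N)²` available cliques whose
color sets have union exactly `R`. Here a set `A` of vertices is an available
clique (for `R`) if its internal edges have pairwise distinct colors, all lying
in `R`; this includes single edges (two-element sets `A`) whose color lies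
in `R`. -/
theorem random_colors_covered_by_available_cliques (ε : ℝ) (hε : 0 < ε) :
    ∃ δ : ℝ, 0 < δ ∧ ∃ N₀ : ℕ, ∀ N : ℕ, N₀ ≤ N →
      ∀ (C : Type) [Fintype C] [DecidableEq C],
      ∀ g : Fin N → Fin N → C,
        -- the coloring is symmetric (it colors undirected edges)
        (∀ x y : Fin N, g x y = g y x) →
        -- the coloring is proper
        (∀ x y z : Fin N, x ≠ y → x ≠ z → y ≠ z → g x y ≠ g x z) →
        -- every color appears on between (1−δ)·N/2 and (1+δ)·N/2 edges
        (∀ c : C,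
          (1 - δ) * (N / 2 : ℝ) ≤
            ({p : Fin N × Fin N | p.1 < p.2 ∧ g p.1 p.2 = c}.ncard : ℝ) ∧
          ({p : Fin N × Fin N | p.1 < p.2 ∧ g p.1 p.2 = c}.ncard : ℝ) ≤
            (1 + δ) * (N / 2 : ℝ)) →
        -- with probability ≥ 1 − ε over a uniformly random set R of colors ...
        (1 - ε) * 2 ^ (Fintype.card C) ≤
          ({R : Finset C | ∃ 𝒞 : Finset (Finset (Fin N)),
              -- ... there is a collection 𝒞 of at most N·log₂log₂N/(log₂N)² cliques
              (𝒞.card : ℝ) ≤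
                N * Real.logb 2 (Real.logb 2 N) / (Real.logb 2 N) ^ 2 ∧
              -- each member of 𝒞 is an available clique:
              (∀ A ∈ 𝒞,
                -- internal edges have pairwise distinct colors ...
                (∀ x ∈ A, ∀ y ∈ A, ∀ z ∈ A, ∀ w ∈ A, x ≠ y → z ≠ w →
                  ¬(x = z ∧ y = w) → ¬(x = w ∧ y = z) → g x y ≠ g z w) ∧
                -- ... all lying in R
                (∀ x ∈ A, ∀ y ∈ A, x ≠ y → g x y ∈ R)) ∧
              -- and R is exactly the union of the color sets of the cliques in 𝒞
              (R : Set C) = ⋃ A ∈ 𝒞, cliqueColors g A}.ncard : ℝ) := by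
  obtain ⟨N₀, hN₀⟩ := aux_num ε hε
  refine ⟨1 / 100, by norm_num, max N₀ 2, ?_⟩
  intro N hN C _ _ g hsymm hprop hcol
  obtain ⟨m, h, D, q, ρ, θ, hm, hD, hDN, hρ, hρ1, hρε, hρ2, hθ, hθ1, hfin⟩ :=
    hN₀ N (le_trans (le_max_left _ _) hN)
  have hN2 : 2 ≤ N := le_trans (le_max_right _ _) hN
  have hcV : Fintype.card (Fin N) = N := Fintype.card_fin N
  have hNpos : (0 : ℝ) < N := by exact_mod_cast (by omega : 0 < N)
  have hn1 : ∀ c, 99 / 100 * (N : ℝ) ≤ (auxn g c).card := by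
    intro c
    rw [aux_card_n g hsymm c]
    push_cast
    have := (hcol c).1
    linarith
  have hn2 : ∀ c, ((auxn g c).card : ℝ) ≤ 101 / 100 * (N : ℝ) := by
    intro c
    rw [aux_card_n g hsymm c]
    push_cast
    have := (hcol c).2
    linarith
  have hC : 0 < Fintype.card C := Fintype.card_pos_iff.2 ⟨g ⟨0, by omega⟩ ⟨1, by omega⟩⟩
  have hC2 : 99 / 100 * (Fintype.card C : ℝ) ≤ N := by
    have h1 : ∑ c : C, (auxn g c).card ≤ N * N := by
      classical
      have h2 : (Finset.univ.biUnion (fun c : C => auxn g c)).card ≤ N * N := by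
        refine (Finset.card_le_univ _).trans ?_
        simp
      rw [Finset.card_biUnion] at h2
      · exact h2
      · intro c _ d _ hcd
        rw [Function.onFun, Finset.disjoint_left]
        intro p hp hp2
        simp only [auxn, Finset.mem_filter, Finset.mem_univ, true_and] at hp hp2
        exact hcd (hp.2.symm.trans hp2.2)
    have h2 : (∑ c : C, ((auxn g c).card : ℝ)) ≤ N * N := by exact_mod_cast h1
    have h3 : ∑ c : C, 99 / 100 * (N : ℝ) ≤ ∑ c : C, ((auxn g c).card : ℝ) :=
      Finset.sum_le_sum fun c _ => hn1 c
    rw [Finset.sum_const, Finset.card_univ, nsmul_eq_mul] at h3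
    have h4 : 99 / 100 * (Fintype.card C : ℝ) * N ≤ N * N := by linarith
    exact le_of_mul_le_mul_right h4 hNpos
  have hev := aux_event g hsymm hprop m h D hm hD (by rw [hcV]; exact hDN)
    (fun c => by
      have : (0 : ℝ) < (auxn g c).card := lt_of_lt_of_le (by positivity) (hn1 c)
      exact_mod_cast this) hC ρ ε hρ hε (by rw [hcV]; exact hρ2)
  refine hev.trans ?_
  refine Nat.cast_le.2 (Set.ncard_le_ncard ?_ (Set.toFinite _))
  intro R hR
  have hR' : ∑ c, ((auxX g m c R).card / ((auxT g m c).card / 2 ^ ((auxPP (m + 2)).card - 1)) - 1 : ℝ) ^ 2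
        ≤ ρ / ε * Fintype.card C := by
    refine le_trans hR (le_of_eq ?_)
    ring
  obtain ⟨𝒞, h1, h2, h3⟩ := aux_det g hsymm hprop m h D hm hD (by rw [hcV]; exact hDN)
    (by rw [hcV]; exact hn1) (by rw [hcV]; exact hn2) hC (by rw [hcV]; exact hC2) ρ (ρ / ε) hρ hρ1
    (by positivity) hρε (by rw [hcV]; exact hρ2) R hR' θ (by rw [hcV]; exact hθ) hθ1 q
  refine ⟨𝒞, h1.trans (hfin _ (by positivity) hC2), h2, ?_⟩
  ext c
  rw [h3]
  simp [auxcol, cliqueColors]
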